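/- In R = ℂ[G] the following hold: (a) if r, r′ ∈ R satisfy (T − 1)²·r = S·(T − 1)²·r′, then r = 0 and r′ = 0; (b) if u, w ∈ R satisfy (T − 1)²·u = (S + 1)·w, then u = 0; (c) if u, w ∈ R satisfy (T − 1)²·u = (S − 1)·w, then u = 0. Consequently the sums defining the right ideals I = (T−1)²R + S(T−1)²R, I₊ = (S+1)R + (T−1)²R, and I₋ = (S−1)R + (T−1)²R are direct. -/

import Mathlib

open scoped MatrixGroups

/-- `PSL₂(ℤ)`: the quotient of `SL₂(ℤ)` by its center `{±I}`. -/
abbrev PSL2Z : Type :=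
  Matrix.SpecialLinearGroup (Fin 2) ℤ ⧸ Subgroup.center (Matrix.SpecialLinearGroup (Fin 2) ℤ)

/-- The image of `T = [[1,1],[0,1]]` in `PSL₂(ℤ)`. -/
def Tg : PSL2Z := QuotientGroup.mk ModularGroup.T

/-- The image of `S = [[0,-1],[1,0]]` in `PSL₂(ℤ)`. -/
def Sg : PSL2Z := QuotientGroup.mk ModularGroup.S

/-- The element `x = S` of `PSL₂(ℤ)`. -/
def xg : PSL2Z := Sg

/-- The element `y = S·T` of `PSL₂(ℤ)`. -/
def yg : PSL2Z := Sg * Tg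

/-- The embedding of the group `PSL₂(ℤ)` into its complex group algebra. -/
noncomputable def ofG : PSL2Z → MonoidAlgebra ℂ PSL2Z := MonoidAlgebra.of ℂ PSL2Z

/-!
Multiplying `r ≠ 0` by `(T - 1)ⁿ` keeps the lowest point of the support of `r` on each line
`{Tⁱ g}` that it meets and raises the highest one by `n`, so a line met by the support of
`(T - 1)² r` is met in two points `Tⁱ g`, `Tʲ g` with `i + 2 ≤ j`. If `g` has rows `v`, `w`, then
`S Tⁱ g` has bottom row `v + i w` up to sign, and by the parallelogram law `v + i w` and `v + j w`
cannot both be at most as long as `w`. Hence, if `(T - 1)² r = S (T - 1)² r'`, every point in the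
support of `(T - 1)² r` yields a point in the support of `(T - 1)² r'` with a longer bottom row, and
vice versa, so both finite supports are empty. The sums with `(S ± 1) R` reduce to this one, since
`S` fixes `(S + 1) w` and negates `(S - 1) w`.
-/

section LineSupport

open MonoidAlgebra

lemma coeff_of_mul_apply {G k : Type*} [Group G] [Semiring k] (x g : G) (r : MonoidAlgebra k G) :
    (of k G x * r).coeff g = r.coeff (x⁻¹ * g) := by
  rw [of_apply, coeff_single_mul_apply, one_mul]

variable {G k : Type*} [Group G] [Ring k] {t g : G} {r : MonoidAlgebra k G}

lemma coeff_of_sub_one_mul_zpow_mul (t g : G) (r : MonoidAlgebra k G) (i : ℤ) :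
    ((of k G t - 1) * r).coeff (t ^ i * g) =
      r.coeff (t ^ (i - 1) * g) - r.coeff (t ^ i * g) := by
  rw [sub_mul, one_mul, coeff_sub, Finsupp.sub_apply, coeff_of_mul_apply, ← mul_assoc,
    ← zpow_neg_one, ← zpow_add, neg_add_eq_sub]

/-- The trace of the support of `r` on the orbit of `g` under left multiplication by powers of `t`,
recorded as the set of exponents. It reduces multiplication by `t - 1` to a difference operator on
functions `ℤ → k`. -/
def lineSupport (t g : G) (r : MonoidAlgebra k G) : Set ℤ :=
  {i | r.coeff (t ^ i * g) ≠ 0}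

namespace lineSupport

lemma mem_iff {i : ℤ} : i ∈ lineSupport t g r ↔ r.coeff (t ^ i * g) ≠ 0 :=
  Iff.rfl

protected lemma finite (ht : ¬IsOfFinOrder t) : (lineSupport t g r).Finite :=
  r.coeff.hasFiniteSupport.preimage
    ((mul_left_injective g).comp (injective_zpow_iff_not_isOfFinOrder.2 ht)).injOn

lemma sub_one_mem_or_mem {i : ℤ} (hi : i ∈ lineSupport t g ((of k G t - 1) * r)) :
    i - 1 ∈ lineSupport t g r ∨ i ∈ lineSupport t g r := by
  contrapose! hi
  simp only [mem_iff, not_not] at hi ⊢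
  rw [coeff_of_sub_one_mul_zpow_mul, hi.1, hi.2, sub_zero]

lemma isLeast_of_sub_one_mul {a : ℤ} (ha : IsLeast (lineSupport t g r) a) :
    IsLeast (lineSupport t g ((of k G t - 1) * r)) a := by
  refine ⟨?_, fun i hi => ?_⟩
  · have below : r.coeff (t ^ (a - 1) * g) = 0 := by
      by_contra h
      exact (sub_one_lt a).not_ge (ha.2 h)
    rw [mem_iff, coeff_of_sub_one_mul_zpow_mul, below, zero_sub]
    exact neg_ne_zero.2 ha.1
  · rcases sub_one_mem_or_mem hi with h | h
    · linarith [ha.2 h]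
    · exact ha.2 h

lemma isGreatest_of_sub_one_mul {b : ℤ} (hb : IsGreatest (lineSupport t g r) b) :
    IsGreatest (lineSupport t g ((of k G t - 1) * r)) (b + 1) := by
  refine ⟨?_, fun i hi => ?_⟩
  · have above : r.coeff (t ^ (b + 1) * g) = 0 := by
      by_contra h
      exact (lt_add_one b).not_ge (hb.2 h)
    rw [mem_iff, coeff_of_sub_one_mul_zpow_mul, above, sub_zero, add_sub_cancel_right]
    exact hb.1
  · rcases sub_one_mem_or_mem hi with h | h
    · linarith [hb.2 h]
    · linarith [hb.2 h]

lemma isLeast_of_sub_one_pow_mul {a : ℤ} (ha : IsLeast (lineSupport t g r) a) (n : ℕ) :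
    IsLeast (lineSupport t g ((of k G t - 1) ^ n * r)) a := by
  induction n with
  | zero => simpa using ha
  | succ n ih => simpa only [pow_succ', mul_assoc] using isLeast_of_sub_one_mul ih

lemma isGreatest_of_sub_one_pow_mul {b : ℤ} (hb : IsGreatest (lineSupport t g r) b) (n : ℕ) :
    IsGreatest (lineSupport t g ((of k G t - 1) ^ n * r)) (b + n) := by
  induction n with
  | zero => simpa using hb
  | succ n ih =>
    simpa only [pow_succ', mul_assoc, Nat.cast_succ, add_assoc] using isGreatest_of_sub_one_mul ih

lemma nonempty_of_sub_one_pow_mul {n : ℕ}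
    (h : (lineSupport t g ((of k G t - 1) ^ n * r)).Nonempty) : (lineSupport t g r).Nonempty := by
  induction n with
  | zero => simpa using h
  | succ n ih =>
    obtain ⟨i, hi⟩ := h
    rw [pow_succ', mul_assoc] at hi
    exact ih ((sub_one_mem_or_mem hi).elim (fun h => ⟨_, h⟩) fun h => ⟨_, h⟩)

lemma exists_add_le_of_sub_one_pow_mul (ht : ¬IsOfFinOrder t) {n : ℕ}
    (h : (lineSupport t g ((of k G t - 1) ^ n * r)).Nonempty) :
    ∃ i ∈ lineSupport t g ((of k G t - 1) ^ n * r),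
      ∃ j ∈ lineSupport t g ((of k G t - 1) ^ n * r), i + n ≤ j := by
  have hr := nonempty_of_sub_one_pow_mul h
  have hfin : (lineSupport t g r).Finite := lineSupport.finite ht
  obtain ⟨a, ha⟩ := hfin.bddBelow.exists_isLeast_of_nonempty hr
  obtain ⟨b, hb⟩ := hfin.bddAbove.exists_isGreatest_of_nonempty hr
  exact ⟨a, (isLeast_of_sub_one_pow_mul ha n).1, b + n, (isGreatest_of_sub_one_pow_mul hb n).1,
    by linarith [ha.2 hb.1]⟩

end lineSupport

lemma isLeftRegular_of_sub_one (ht : ¬IsOfFinOrder t) : IsLeftRegular (of k G t - 1) := by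
  refine isLeftRegular_of_non_zero_divisor _ fun r hr => ?_
  by_contra hne
  obtain ⟨g, hg⟩ := Finsupp.ne_iff.1 (coeff_eq_zero.not.2 hne)
  have hline : (lineSupport t g r).Nonempty := ⟨0, by simpa [lineSupport.mem_iff] using hg⟩
  obtain ⟨a, ha⟩ := (lineSupport.finite ht).bddBelow.exists_isLeast_of_nonempty hline
  exact (lineSupport.isLeast_of_sub_one_mul ha).1 (by rw [hr]; rfl)

end LineSupport

section PingPong

open MonoidAlgebra

variable {G k α : Type*} [Group G] [Ring k] [LinearOrder α] {s t : G} {n : ℕ} {N : G → α}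

/-- The ping-pong condition on a height `N`: among any two points of a line `{tⁱ g}` whose exponents
differ by at least `n`, one is moved by `s` to a point higher than the given point `g` of the
line. -/
def IsPingPongHeight (s t : G) (n : ℕ) (N : G → α) : Prop :=
  ∀ (g : G) (i j : ℤ), i + n ≤ j → N g < max (N (s * (t ^ i * g))) (N (s * (t ^ j * g)))

namespace IsPingPongHeight

lemma mono {m : ℕ} (hN : IsPingPongHeight s t m N) (hmn : m ≤ n) : IsPingPongHeight s t n N :=
  fun g i j hij => hN g i j (by omega)

lemma not_isOfFinOrder (hN : IsPingPongHeight s t n N) (hs : s * s = 1) : ¬IsOfFinOrder t := by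
  intro ht
  obtain ⟨d, hd, htd⟩ := isOfFinOrder_iff_pow_eq_one.1 ht
  have climb (g : G) : N g < N (s * g) := by
    have hle : (0 : ℤ) + n ≤ ((d * n : ℕ) : ℤ) := by
      rw [zero_add]
      exact_mod_cast Nat.le_mul_of_pos_left n hd
    simpa only [zpow_natCast, pow_mul, htd, one_pow, zpow_zero, one_mul, max_self]
      using hN g 0 (d * n : ℕ) hle
  have back : N (s * 1) < N (s * (s * 1)) := climb _
  rw [← mul_assoc, hs, one_mul] at back
  exact (climb 1).asymm back

lemma exists_lt (hN : IsPingPongHeight s t n N) (ht : ¬IsOfFinOrder t) {r : MonoidAlgebra k G}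
    {g : G} (hg : ((of k G t - 1) ^ n * r).coeff g ≠ 0) :
    ∃ h, ((of k G t - 1) ^ n * r).coeff h ≠ 0 ∧ N g < N (s * h) := by
  have hline : (lineSupport t g ((of k G t - 1) ^ n * r)).Nonempty :=
    ⟨0, by simpa only [lineSupport.mem_iff, zpow_zero, one_mul] using hg⟩
  obtain ⟨i, hi, j, hj, hij⟩ := lineSupport.exists_add_le_of_sub_one_pow_mul ht hline
  rcases lt_max_iff.1 (hN g i j hij) with h | h
  · exact ⟨_, hi, h⟩
  · exact ⟨_, hj, h⟩

lemma sub_one_pow_mul_eq_zero (hN : IsPingPongHeight s t n N) (hs : s * s = 1)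
    {r r' : MonoidAlgebra k G}
    (h : (of k G t - 1) ^ n * r = of k G s * (of k G t - 1) ^ n * r') :
    (of k G t - 1) ^ n * r = 0 := by
  have ht := hN.not_isOfFinOrder hs
  rw [mul_assoc] at h
  set f := (of k G t - 1) ^ n * r
  set f' := (of k G t - 1) ^ n * r'
  have swap (x : G) : f.coeff (s * x) = f'.coeff x := by
    rw [h, coeff_of_mul_apply, inv_mul_cancel_left]
  have swap' (x : G) : f'.coeff (s * x) = f.coeff x := by
    rw [← swap, ← mul_assoc, hs, one_mul]
  let A : Set G := {x | f.coeff x ≠ 0 ∨ f'.coeff x ≠ 0}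
  have hA : A.Finite := f.coeff.hasFiniteSupport.union f'.coeff.hasFiniteSupport
  have climb (g : G) (hg : g ∈ A) : ∃ g' ∈ A, N g < N g' := by
    rcases hg with hg | hg
    · obtain ⟨x, hx, hlt⟩ := hN.exists_lt ht hg
      exact ⟨s * x, Or.inr (by rwa [swap']), hlt⟩
    · obtain ⟨x, hx, hlt⟩ := hN.exists_lt ht hg
      exact ⟨s * x, Or.inl (by rwa [swap]), hlt⟩
  by_contra hne
  obtain ⟨g, hg⟩ := Finsupp.ne_iff.1 (coeff_eq_zero.not.2 hne)
  obtain ⟨top, htop, hmax⟩ := Set.exists_max_image A N hA ⟨g, Or.inl hg⟩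
  obtain ⟨g', hg', hlt⟩ := climb top htop
  exact (hmax g' hg').not_gt hlt

theorem eq_zero_and_eq_zero_of_eq_mul (hN : IsPingPongHeight s t n N) (hs : s * s = 1)
    {r r' : MonoidAlgebra k G}
    (h : (of k G t - 1) ^ n * r = of k G s * (of k G t - 1) ^ n * r') : r = 0 ∧ r' = 0 := by
  have hreg : IsLeftRegular ((of k G t - 1) ^ n) :=
    (isLeftRegular_of_sub_one (hN.not_isOfFinOrder hs)).pow n
  have h' : (of k G t - 1) ^ n * r' = of k G s * (of k G t - 1) ^ n * r := by
    rw [mul_assoc, h, mul_assoc, ← mul_assoc, ← map_mul, hs, map_one, one_mul]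
  exact ⟨hreg.mul_left_eq_zero_iff.1 (hN.sub_one_pow_mul_eq_zero hs h),
    hreg.mul_left_eq_zero_iff.1 (hN.sub_one_pow_mul_eq_zero hs h')⟩

theorem eq_zero_of_eq_of_add_one_mul (hN : IsPingPongHeight s t n N) (hs : s * s = 1)
    {u w : MonoidAlgebra k G} (h : (of k G t - 1) ^ n * u = (of k G s + 1) * w) : u = 0 := by
  have hs' : of k G s * of k G s = 1 := by rw [← map_mul, hs, map_one]
  refine (hN.eq_zero_and_eq_zero_of_eq_mul (r' := u) hs ?_).1
  rw [mul_assoc, h, ← mul_assoc, mul_add, hs', mul_one, add_comm]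

theorem eq_zero_of_eq_of_sub_one_mul (hN : IsPingPongHeight s t n N) (hs : s * s = 1)
    {u w : MonoidAlgebra k G} (h : (of k G t - 1) ^ n * u = (of k G s - 1) * w) : u = 0 := by
  have hs' : of k G s * of k G s = 1 := by rw [← map_mul, hs, map_one]
  refine (hN.eq_zero_and_eq_zero_of_eq_mul (r' := -u) hs ?_).1
  rw [mul_assoc, mul_neg, h, mul_neg, ← mul_assoc, mul_sub, hs', mul_one, ← neg_mul, neg_sub]

end IsPingPongHeight

end PingPong

lemma lt_max_normSq_add_mul {R : Type*} [CommRing R] [LinearOrder R] [IsStrictOrderedRing R]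
    {a b c d x y : R} (hdet : a * d - b * c ≠ 0) (hxy : x + 2 ≤ y) :
    c ^ 2 + d ^ 2 <
      max ((a + x * c) ^ 2 + (b + x * d) ^ 2) ((a + y * c) ^ 2 + (b + y * d) ^ 2) := by
  by_contra! hle
  obtain ⟨hx, hy⟩ := max_le_iff.1 hle
  have parallelogram :
      (2 * a + (x + y) * c) ^ 2 + (2 * b + (x + y) * d) ^ 2 + (y - x) ^ 2 * (c ^ 2 + d ^ 2) =
        2 * ((a + x * c) ^ 2 + (b + x * d) ^ 2) + 2 * ((a + y * c) ^ 2 + (b + y * d) ^ 2) := by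
    ring
  have hgap : 2 ^ 2 * (c ^ 2 + d ^ 2) ≤ (y - x) ^ 2 * (c ^ 2 + d ^ 2) := by
    gcongr
    linarith
  have hsum : (2 * a + (x + y) * c) ^ 2 + (2 * b + (x + y) * d) ^ 2 ≤ 0 := by
    linarith [parallelogram]
  have hc : 2 * a + (x + y) * c = 0 := by nlinarith [hsum]
  have hd : 2 * b + (x + y) * d = 0 := by nlinarith [hsum]
  have : 2 * (a * d - b * c) = 0 := by linear_combination d * hc - c * hd
  exact hdet ((mul_eq_zero.1 this).resolve_left two_ne_zero)

lemma exists_eq_mul_of_inv_mul_mem_center {m R : Type*} [Fintype m] [DecidableEq m] [CommRing R]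
    {A B : Matrix.SpecialLinearGroup m R}
    (h : A⁻¹ * B ∈ Subgroup.center (Matrix.SpecialLinearGroup m R)) :
    ∃ c : R, c ^ Fintype.card m = 1 ∧ ∀ i j, B i j = A i j * c := by
  obtain ⟨c, hc, hscalar⟩ := Matrix.SpecialLinearGroup.mem_center_iff.1 h
  refine ⟨c, hc, fun i j => ?_⟩
  have hB : B.1 = A.1 * Matrix.scalar m c := by
    rw [hscalar, ← Matrix.SpecialLinearGroup.coe_mul, mul_inv_cancel_left]
  change B.1 i j = A.1 i j * c
  rw [hB, Matrix.scalar_apply, Matrix.mul_diagonal]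

section PSL2Z

/-- The squared Euclidean norm of the bottom row of a representative in `SL₂(ℤ)`, which does not
depend on the sign of the representative. It is the height to which ping-pong is applied. -/
def bottomRowNormSq : PSL2Z → ℤ :=
  Quotient.lift (fun A : SL(2, ℤ) => A 1 0 ^ 2 + A 1 1 ^ 2) fun A B hAB => by
    obtain ⟨c, hc, hB⟩ := exists_eq_mul_of_inv_mul_mem_center (QuotientGroup.leftRel_apply.1 hAB)
    rw [Fintype.card_fin] at hc
    simp only [hB]
    linear_combination -(A 1 0 ^ 2 + A 1 1 ^ 2) * hc

lemma bottomRowNormSq_mk (A : SL(2, ℤ)) :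
    bottomRowNormSq (QuotientGroup.mk A) = A 1 0 ^ 2 + A 1 1 ^ 2 :=
  rfl

lemma bottomRowNormSq_Sg_mul_Tg_zpow_mul_mk (i : ℤ) (A : SL(2, ℤ)) :
    bottomRowNormSq (Sg * (Tg ^ i * QuotientGroup.mk A)) =
      (A 0 0 + i * A 1 0) ^ 2 + (A 0 1 + i * A 1 1) ^ 2 := by
  change bottomRowNormSq (QuotientGroup.mk (ModularGroup.S * (ModularGroup.T ^ i * A))) = _
  rw [bottomRowNormSq_mk]
  simp [ModularGroup.coe_S, ModularGroup.coe_T_zpow, Matrix.vecMul_eq_sum]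

lemma Sg_mul_Sg : Sg * Sg = 1 := by
  change QuotientGroup.mk (ModularGroup.S * ModularGroup.S) = (1 : PSL2Z)
  rw [QuotientGroup.eq_one_iff, Matrix.SpecialLinearGroup.mem_center_iff]
  refine ⟨-1, by simp, ?_⟩
  rw [Matrix.SpecialLinearGroup.coe_mul, ModularGroup.S_mul_S_eq, map_neg, map_one]

lemma isPingPongHeight_bottomRowNormSq : IsPingPongHeight Sg Tg 2 bottomRowNormSq := by
  intro g i j hij
  obtain ⟨A, rfl⟩ := QuotientGroup.mk_surjective g
  have hdet : A 0 0 * A 1 1 - A 0 1 * A 1 0 ≠ 0 := by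
    rw [← Matrix.det_fin_two, A.det_coe]
    exact one_ne_zero
  rw [bottomRowNormSq_Sg_mul_Tg_zpow_mul_mk, bottomRowNormSq_Sg_mul_Tg_zpow_mul_mk,
    bottomRowNormSq_mk]
  exact lt_max_normSq_add_mul hdet hij

open MonoidAlgebra in
theorem free_ideals_general {k : Type*} [Ring k] {n : ℕ} (hn : 2 ≤ n) :
    (∀ r r' : MonoidAlgebra k PSL2Z,
      (of k PSL2Z Tg - 1) ^ n * r = of k PSL2Z Sg * (of k PSL2Z Tg - 1) ^ n * r' →
        r = 0 ∧ r' = 0) ∧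
    (∀ u w : MonoidAlgebra k PSL2Z,
      (of k PSL2Z Tg - 1) ^ n * u = (of k PSL2Z Sg + 1) * w → u = 0) ∧
    (∀ u w : MonoidAlgebra k PSL2Z,
      (of k PSL2Z Tg - 1) ^ n * u = (of k PSL2Z Sg - 1) * w → u = 0) := by
  have hN : IsPingPongHeight Sg Tg n bottomRowNormSq := isPingPongHeight_bottomRowNormSq.mono hn
  exact ⟨fun _ _ => hN.eq_zero_and_eq_zero_of_eq_mul Sg_mul_Sg,
    fun _ _ => hN.eq_zero_of_eq_of_add_one_mul Sg_mul_Sg,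
    fun _ _ => hN.eq_zero_of_eq_of_sub_one_mul Sg_mul_Sg⟩

end PSL2Z

/-- The sums defining the right ideals `𝓘 = (T-1)²R + S(T-1)²R`, `𝓘₊ = (S+1)R + (T-1)²R`,
and `𝓘₋ = (S-1)R + (T-1)²R` of `R = ℂ[PSL₂(ℤ)]` are direct: (a) `(T-1)²r = S(T-1)²r'` forces
`r = r' = 0`; (b) `(T-1)²u = (S+1)w` forces `u = 0`; (c) `(T-1)²u = (S-1)w` forces `u = 0`. -/
theorem free_ideals :
    (∀ r r' : MonoidAlgebra ℂ PSL2Z,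
      (ofG Tg - 1) ^ 2 * r = ofG Sg * (ofG Tg - 1) ^ 2 * r' → r = 0 ∧ r' = 0) ∧
    (∀ u w : MonoidAlgebra ℂ PSL2Z,
      (ofG Tg - 1) ^ 2 * u = (ofG Sg + 1) * w → u = 0) ∧
    (∀ u w : MonoidAlgebra ℂ PSL2Z,
      (ofG Tg - 1) ^ 2 * u = (ofG Sg - 1) * w → u = 0) :=
  free_ideals_general le_rfl
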